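/- Let I be a finite index set and, for each i ∈ I, let ψ_i and χ_i be Kh-free formulas. Set φ⁻ = ⋀_{i∈I} ¬Kh(ψ_i, χ_i) and θ⁻ = ⋀_{i∈I} E(ψ_i ∧ ¬χ_i). Then φ⁻ is satisfiable (in some LTS) if and only if θ⁻ is satisfiable (in some LTS). -/

import Mathlib

/-!
Both directions compare models over the same states and the same valuation. For `⇒` no change of
model is needed: the empty plan is always strongly executable and its image of `⟦ψ⟧` is `⟦ψ⟧`, so
`¬Kh(ψ,χ)` forces a state in `⟦ψ⟧ ∖ ⟦χ⟧` (`exists_of_not_kh`). For `⇐`, erase all transitions. The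
truth sets of Kh-free formulas depend only on the valuation (`truth_eq_of_khFree`), so a state in
`⟦ψ⟧ ∖ ⟦χ⟧` survives; there no nonempty plan is executable, and the empty plan ends outside `⟦χ⟧`,
hence `¬Kh(ψ,χ)` holds. The abbreviation `E` has its intended meaning (`mem_truth_Eform`) because
a strongly executable plan always has a run (`exists_run_of_SE`), so no plan leads from a nonempty
set into `∅`.
-/

/-- Formulas of the logic L(Kh): p | ¬φ | φ∨ψ | Kh(φ,ψ). -/
inductive KhForm (P : Type) : Type
  | prop : P → KhForm P
  | neg : KhForm P → KhForm P
  | or : KhForm P → KhForm P → KhForm P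
  | kh : KhForm P → KhForm P → KhForm P
  deriving DecidableEq

namespace KhForm

/-- Conjunction, as the usual abbreviation. -/
def and {P : Type} (φ ψ : KhForm P) : KhForm P := .neg (.or (.neg φ) (.neg ψ))

/-- ⊥ abbreviates p ∧ ¬p for a fixed propositional symbol p. -/
def bot {P : Type} (p : P) : KhForm P := and (.prop p) (.neg (.prop p))

/-- ⊤ abbreviates ¬⊥. -/
def top {P : Type} (p : P) : KhForm P := .neg (bot p)

/-- Number of symbols of a formula. -/
def size {P : Type} : KhForm P → ℕ
  | .prop _ => 1
  | .neg φ => size φ + 1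
  | .or φ ψ => size φ + size ψ + 1
  | .kh φ ψ => size φ + size ψ + 1

end KhForm

/-- A formula is Kh-free if it contains no occurrence of Kh. -/
def KhFree {P : Type} : KhForm P → Prop
  | .prop _ => True
  | .neg φ => KhFree φ
  | .or φ ψ => KhFree φ ∧ KhFree ψ
  | .kh _ _ => False

/-- A labelled transition system over propositional symbols `P`, action symbols `A`
and states `S`: a family of binary relations on `S` and a valuation. -/
structure LTS (P A S : Type) where
  R : A → S → S → Prop
  V : P → Set S

/-- The relation `R_π` associated to a plan (finite word over `A`):
`R_ε` is the identity and `R_{πa} = R_π ; R_a`. -/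
def runPlan {P A S : Type} (M : LTS P A S) : List A → S → S → Prop
  | [] => fun s t => s = t
  | a :: π => fun s t => ∃ u, M.R a s u ∧ runPlan M π u t

/-- `R_π(X)`, the image of a set of states under a plan. -/
def planImage {P A S : Type} (M : LTS P A S) (π : List A) (X : Set S) : Set S :=
  { t | ∃ s ∈ X, runPlan M π s t }

/-- Strong executability of a plan at a state: at every step of the plan, the
next action is guaranteed to be performable. -/
def SE {P A S : Type} (M : LTS P A S) : List A → S → Prop
  | [] => fun _ => True
  | a :: π => fun s => (∃ u, M.R a s u) ∧ ∀ u, M.R a s u → SE M π u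

/-- Truth sets: `⟦Kh(φ,ψ)⟧ = S` if there is a plan π with `⟦φ⟧ ⊆ SE(π)` and
`R_π(⟦φ⟧) ⊆ ⟦ψ⟧`, and `∅` otherwise. -/
def truth {P A S : Type} (M : LTS P A S) : KhForm P → Set S
  | .prop p => M.V p
  | .neg φ => (truth M φ)ᶜ
  | .or φ ψ => truth M φ ∪ truth M ψ
  | .kh φ ψ => { _s | ∃ π : List A,
      (∀ s ∈ truth M φ, SE M π s) ∧ planImage M π (truth M φ) ⊆ truth M ψ }

/-- π is a witness for Kh(φ,ψ) in M. -/
def IsWitness {P A S : Type} (M : LTS P A S) (π : List A) (φ ψ : KhForm P) : Prop :=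
  (∀ s ∈ truth M φ, SE M π s) ∧ planImage M π (truth M φ) ⊆ truth M ψ

/-- The universal modality `Aφ`, as the abbreviation `Kh(¬φ,⊥)`. -/
def Aform {P : Type} (p : P) (φ : KhForm P) : KhForm P := .kh (.neg φ) (KhForm.bot p)

/-- The existential modality `Eφ = ¬A¬φ`. -/
def Eform {P : Type} (p : P) (φ : KhForm P) : KhForm P := .neg (Aform p (.neg φ))

/-- Subjective formulas: Boolean combinations (¬, ∨) of positive atoms
Kh(ψ,χ) with ψ, χ Kh-free. -/
inductive Subjective {P : Type} : KhForm P → Prop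
  | atom {ψ χ : KhForm P} : KhFree ψ → KhFree χ → Subjective (.kh ψ χ)
  | neg {φ : KhForm P} : Subjective φ → Subjective (.neg φ)
  | or {φ ψ : KhForm P} : Subjective φ → Subjective ψ → Subjective (.or φ ψ)

/-- Formulas of the logic L(A): p | ¬α | α∨β | Aα. -/
inductive AForm (P : Type) : Type
  | prop : P → AForm P
  | neg : AForm P → AForm P
  | or : AForm P → AForm P → AForm P
  | all : AForm P → AForm P

/-- Truth sets for L(A) formulas over an LTS. -/
def atruth {P A S : Type} (M : LTS P A S) : AForm P → Set S
  | .prop p => M.V p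
  | .neg α => (atruth M α)ᶜ
  | .or α β => atruth M α ∪ atruth M β
  | .all α => { _s | atruth M α = Set.univ }

/-- `CBar I D s t`: the pair (s,t) is in the reflexive-transitive closure (on I)
of `D̄ = (I×I) ∖ D`. -/
def CBar {ι : Type} (I : Finset ι) (D : Finset (ι × ι)) (s t : ι) : Prop :=
  s ∈ I ∧ t ∈ I ∧ Relation.ReflTransGen (fun u v => u ∈ I ∧ v ∈ I ∧ (u, v) ∉ D) s t

/-- `ρ` occurs (as a subformula) in a formula. -/
inductive IsSubformula {P : Type} (ρ : KhForm P) : KhForm P → Prop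
  | refl : IsSubformula ρ ρ
  | neg {φ : KhForm P} : IsSubformula ρ φ → IsSubformula ρ (.neg φ)
  | orL {φ ψ : KhForm P} : IsSubformula ρ φ → IsSubformula ρ (.or φ ψ)
  | orR {φ ψ : KhForm P} : IsSubformula ρ ψ → IsSubformula ρ (.or φ ψ)
  | khL {φ ψ : KhForm P} : IsSubformula ρ φ → IsSubformula ρ (.kh φ ψ)
  | khR {φ ψ : KhForm P} : IsSubformula ρ ψ → IsSubformula ρ (.kh φ ψ)

/-- Replace all occurrences of the atom Kh(ψ,χ) by ρ. -/
def substKh {P : Type} [DecidableEq P] (ψ χ ρ : KhForm P) : KhForm P → KhForm P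
  | .prop q => .prop q
  | .neg φ => .neg (substKh ψ χ ρ φ)
  | .or φ₁ φ₂ => .or (substKh ψ χ ρ φ₁) (substKh ψ χ ρ φ₂)
  | .kh φ₁ φ₂ =>
      if φ₁ = ψ ∧ φ₂ = χ then ρ
      else .kh (substKh ψ χ ρ φ₁) (substKh ψ χ ρ φ₂)

theorem truth_eq_of_khFree {P A S : Type} {M N : LTS P A S} (hV : M.V = N.V) {φ : KhForm P}
    (h : KhFree φ) : truth M φ = truth N φ := by
  induction φ with
  | prop q => simp only [truth, hV]
  | neg φ ih => simp only [truth, ih h]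
  | or φ ψ ih₁ ih₂ => simp only [truth, ih₁ h.1, ih₂ h.2]
  | kh φ ψ _ _ => exact h.elim

theorem exists_run_of_SE {P A S : Type} (M : LTS P A S) (π : List A) {s : S} (h : SE M π s) :
    ∃ t, runPlan M π s t := by
  induction π generalizing s with
  | nil => exact ⟨s, rfl⟩
  | cons a π ih =>
    obtain ⟨⟨u, hu⟩, h'⟩ := h
    obtain ⟨t, ht⟩ := ih (h' u hu)
    exact ⟨t, u, hu, ht⟩

theorem truth_and {P A S : Type} (M : LTS P A S) (φ ψ : KhForm P) :
    truth M (KhForm.and φ ψ) = truth M φ ∩ truth M ψ := by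
  simp [KhForm.and, truth]

theorem truth_bot {P A S : Type} (M : LTS P A S) (p : P) : truth M (KhForm.bot p) = ∅ := by
  simp [KhForm.bot, truth_and, truth]

theorem mem_truth_Eform {P A S : Type} (M : LTS P A S) (p : P) (φ : KhForm P) (s : S) :
    s ∈ truth M (Eform p φ) ↔ (truth M φ).Nonempty := by
  simp only [Eform, Aform, truth, truth_bot, compl_compl, Set.mem_compl_iff, Set.mem_ofPred_eq]
  constructor
  · intro h
    by_contra hne
    rw [Set.not_nonempty_iff_eq_empty] at hne
    exact h ⟨[], by simp [hne, planImage]⟩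
  · rintro ⟨t, ht⟩ ⟨π, hSE, hsub⟩
    obtain ⟨u, hu⟩ := exists_run_of_SE M π (hSE t ht)
    exact hsub ⟨t, ht, hu⟩

theorem exists_of_not_kh {P A S : Type} (M : LTS P A S) {φ ψ : KhForm P} {s : S}
    (h : s ∈ truth M (.neg (.kh φ ψ))) : (truth M φ \ truth M ψ).Nonempty := by
  by_contra hne
  rw [Set.not_nonempty_iff_eq_empty, Set.sdiff_eq_empty] at hne
  refine h ⟨[], fun _ _ => trivial, ?_⟩
  rintro t ⟨u, hu, rfl⟩
  exact hne hu

/-- φ⁻ = ⋀_{i∈I} ¬Kh(ψ_i,χ_i) is satisfiable iff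
θ⁻ = ⋀_{i∈I} E(ψ_i ∧ ¬χ_i) is satisfiable. -/
theorem satminus
    (P A ι : Type) [Countable P] [Countable A] [Infinite A]
    (p : P) (I : Finset ι) (ψ χ : ι → KhForm P)
    (hψ : ∀ i ∈ I, KhFree (ψ i)) (hχ : ∀ i ∈ I, KhFree (χ i)) :
    (∃ (S : Type) (_ : Nonempty S) (M : LTS P A S) (s : S),
        ∀ i ∈ I, s ∈ truth M (KhForm.neg (.kh (ψ i) (χ i)))) ↔
    (∃ (S : Type) (_ : Nonempty S) (M : LTS P A S) (s : S),
        ∀ i ∈ I, s ∈ truth M (Eform p (KhForm.and (ψ i) (.neg (χ i))))) := by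
  constructor
  · rintro ⟨S, hS, M, s, h⟩
    refine ⟨S, hS, M, s, fun i hi => ?_⟩
    rw [mem_truth_Eform, truth_and]
    exact exists_of_not_kh M (h i hi)
  · rintro ⟨S, hS, M, s, h⟩
    let N : LTS P A S := ⟨fun _ _ _ => False, M.V⟩
    refine ⟨S, hS, N, s, fun i hi => ?_⟩
    obtain ⟨t, ht⟩ := (mem_truth_Eform M p _ s).1 (h i hi)
    rw [truth_and] at ht
    obtain ⟨htψ, htχ⟩ := ht
    rw [truth_eq_of_khFree (M := M) (N := N) rfl (hψ i hi)] at htψ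
    replace htχ : t ∉ truth N (χ i) := by
      rwa [← truth_eq_of_khFree (M := M) (N := N) rfl (hχ i hi)]
    rintro ⟨π, hSE, hsub⟩
    cases π with
    | nil => exact htχ (hsub ⟨t, htψ, rfl⟩)
    | cons a π =>
      obtain ⟨⟨u, hu⟩, -⟩ := hSE t htψ
      exact hu
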